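/- arXiv:math/0110181 — 3 statements merged into one kernel-verified Lean document; each statement's English description precedes it below -/
import Mathlib

section
/- Let κ be a composition chosen uniformly at random from the 2^{n-1} compositions of n. Then the number of distinct part sizes |D(κ)| satisfies |D(κ)| ∼ log₂ n with probability 1 − o(1): for every ε > 0, the proportion of compositions κ of n satisfying (1−ε)·log₂ n ≤ |D(κ)| ≤ (1+ε)·log₂ n tends to 1 as n → ∞. -/
open Filter

namespace DPS

open Finset

/-- compositions of `n` (as lists) avoiding `m` -/
def S (m n : ℕ) : Finset (List ℕ) :=
  ((univ : Finset (Composition n)).filter (fun κ => m ∉ κ.blocks)).image (fun κ => κ.blocks)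

lemma mem_S {m n : ℕ} {l : List ℕ} :
    l ∈ S m n ↔ (∀ i ∈ l, 0 < i) ∧ l.sum = n ∧ m ∉ l := by
  unfold S
  simp only [mem_image, mem_filter, mem_univ, true_and]
  constructor
  · rintro ⟨κ, h, rfl⟩
    exact ⟨fun i hi => κ.blocks_pos hi, κ.blocks_sum, h⟩
  · rintro ⟨h1, h2, h3⟩
    exact ⟨⟨l, fun {i} hi => h1 i hi, h2⟩, h3, rfl⟩

lemma blocks_inj (n : ℕ) : Function.Injective (fun κ : Composition n => κ.blocks) :=
  fun _ _ h => Composition.ext h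

lemma card_S (m n : ℕ) : (S m n).card =
    ((univ : Finset (Composition n)).filter (fun κ => m ∉ κ.blocks)).card :=
  card_image_of_injective _ (blocks_inj n)

lemma S_rec (m n : ℕ) (hn : 0 < n) :
    (S m n).card ≤ ∑ j ∈ (Icc 1 n).erase m, (S m (n - j)).card := by
  have hsub : S m n ⊆ ((Icc 1 n).erase m).biUnion
      (fun j => (S m (n - j)).image (fun l => j :: l)) := by
    intro l hl
    rw [mem_S] at hl
    obtain ⟨h1, h2, h3⟩ := hl
    cases l with
    | nil => simp at h2; omega
    | cons a t =>
      simp only [List.mem_cons, forall_eq_or_imp, List.sum_cons, not_or] at h1 h2 h3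
      simp only [mem_biUnion, mem_image, mem_erase, mem_Icc]
      refine ⟨a, ⟨fun h => h3.1 h.symm, h1.1, by omega⟩, t, ?_, rfl⟩
      rw [mem_S]
      exact ⟨h1.2, by omega, h3.2⟩
  refine (card_le_card hsub).trans (card_biUnion_le.trans ?_)
  exact sum_le_sum fun j _ => card_image_le

lemma sum_pow_bound (m n : ℕ) (hm : 1 ≤ m) (x δ : ℝ) (hδ : δ = 1 / 2 ^ (m + 1))
    (hx : x = 2 - δ) :
    ∑ j ∈ (Icc 1 n).erase m, x ^ (n - j) ≤ x ^ n := by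
  have hδ0 : 0 < δ := by rw [hδ]; positivity
  have hδm : δ * 2 ^ m = 1 / 2 := by
    rw [hδ, pow_succ]; field_simp
  have h2m : (2 : ℝ) ≤ 2 ^ m := by
    calc (2 : ℝ) = 2 ^ 1 := by norm_num
      _ ≤ 2 ^ m := pow_le_pow_right₀ (by norm_num) hm
  have hδ4 : δ ≤ 1 / 4 := by nlinarith
  have hx0 : 0 < x := by linarith
  have hx2 : x ≤ 2 := by linarith
  have hgeom : (∑ j ∈ Icc 1 n, x ^ (n - j)) * (x - 1) = x ^ n - 1 := by
    rw [← geom_sum_mul]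
    congr 1
    refine sum_nbij' (fun j => n - j) (fun j => n - j) ?_ ?_ ?_ ?_ ?_ <;>
      simp only [mem_Icc, mem_range] <;> intros <;> first | omega | trivial
  have hx1 : 0 < x - 1 := by linarith
  by_cases hmn : m ≤ n
  · have hs : ∑ j ∈ (Icc 1 n).erase m, x ^ (n - j) + x ^ (n - m) = ∑ j ∈ Icc 1 n, x ^ (n - j) :=
      sum_erase_add _ _ (by simp [hm, hmn])
    have hp : x ^ n = x ^ (n - m) * x ^ m := by rw [← pow_add]; congr 1; omega
    have hxm : x ^ m ≤ 2 ^ m := pow_le_pow_left₀ hx0.le hx2 m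
    have hq : 0 < x ^ (n - m) := by positivity
    have key : δ * x ^ m ≤ 1 - δ := by nlinarith
    have key2 : δ * x ^ n ≤ (1 - δ) * x ^ (n - m) := by
      rw [hp]; nlinarith
    have : (∑ j ∈ Icc 1 n, x ^ (n - j)) * (x - 1) ≤ (x ^ n + x ^ (n - m)) * (x - 1) := by
      rw [hgeom, hx] at *
      nlinarith
    have := le_of_mul_le_mul_right this hx1
    linarith
  · have hs : (Icc 1 n).erase m = Icc 1 n := erase_eq_of_notMem (by simp; omega)
    rw [hs]
    have hxm : x ^ n ≤ 2 ^ m := (pow_le_pow_left₀ hx0.le hx2 n).trans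
      (pow_le_pow_right₀ (by norm_num) (by omega))
    have key : δ * x ^ n ≤ 1 := by nlinarith
    refine le_of_mul_le_mul_right ?_ hx1
    rw [hgeom]
    have : x - 1 = 1 - δ := by rw [hx]; ring
    rw [this]; nlinarith

lemma S_bound (m : ℕ) (hm : 1 ≤ m) (n : ℕ) :
    ((S m n).card : ℝ) ≤ (2 - 1 / 2 ^ (m + 1)) ^ n := by
  induction n using Nat.strong_induction_on with
  | _ n ih =>
    rcases Nat.eq_zero_or_pos n with rfl | hn
    · have : (S m 0).card ≤ 1 := by
        rw [card_S]
        refine (card_filter_le _ _).trans ?_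
        rw [card_univ, composition_card]; simp
      simpa using this
    · calc ((S m n).card : ℝ) ≤ ((∑ j ∈ (Icc 1 n).erase m, (S m (n - j)).card : ℕ) : ℝ) := by
            exact_mod_cast S_rec m n hn
        _ = ∑ j ∈ (Icc 1 n).erase m, ((S m (n - j)).card : ℝ) := by push_cast; rfl
        _ ≤ ∑ j ∈ (Icc 1 n).erase m, (2 - 1 / 2 ^ (m + 1) : ℝ) ^ (n - j) := by
            refine sum_le_sum fun j hj => ih _ ?_
            simp at hj; omega
        _ ≤ _ := sum_pow_bound m n hm _ _ rfl rfl

/-- compositions having a part larger than `U` -/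
def B (U n : ℕ) : Finset (Composition n) :=
  (univ : Finset (Composition n)).filter (fun κ => ∃ m ∈ κ.blocks, U < m)

lemma B_bound (U n : ℕ) : (B U n).card * 2 ^ U ≤ n * 2 ^ (n - 1) := by
  by_cases hU : U < n
  · have hsub : (B U n).image (fun κ => κ.blocks) ⊆
        (range n ×ˢ (univ : Finset (Composition (n - U)))).image
          (fun p => p.2.blocks.modify p.1 (· + U)) := by
      intro l hl
      simp only [B, mem_image, mem_filter, mem_univ, true_and] at hl
      obtain ⟨κ, ⟨m, hm, hUm⟩, rfl⟩ := hl
      obtain ⟨s, t, hst⟩ := List.append_of_mem hm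
      have hsum := κ.blocks_sum
      have hpos : ∀ i ∈ κ.blocks, 0 < i := fun i hi => κ.blocks_pos hi
      have hlen := κ.length_le
      rw [Composition.length] at hlen
      rw [hst] at hsum hpos hlen
      simp at hsum hlen
      simp only [mem_image, mem_product, mem_range, mem_univ, and_true]
      refine ⟨(s.length, ⟨s ++ (m - U) :: t, ?_, ?_⟩), ?_, ?_⟩
      · intro i hi
        simp only [List.mem_append, List.mem_cons] at hi
        rcases hi with h | h | h
        · exact hpos i (by simp [h])
        · omega
        · exact hpos i (by simp [h])
      · simp; omega
      · simp; omega
      · have hmU : m - U + U = m := by omega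
        simp [hst, List.modify_eq_take_cons_drop, hmU]
    have h1 : (B U n).card ≤ n * 2 ^ (n - U - 1) := by
      rw [← card_image_of_injective _ (blocks_inj n)]
      refine (card_le_card hsub).trans (card_image_le.trans ?_)
      rw [card_product, card_range, card_univ, composition_card]
    calc (B U n).card * 2 ^ U ≤ n * 2 ^ (n - U - 1) * 2 ^ U := Nat.mul_le_mul_right _ h1
      _ = n * 2 ^ (n - 1) := by rw [mul_assoc, ← pow_add]; congr 2; omega
  · have : B U n = ∅ := by
      refine filter_eq_empty_iff.2 ?_
      rintro κ - ⟨m, hm, h⟩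
      have := κ.blocks_le hm
      omega
    simp [this]

lemma good_bound (n L U : ℕ) (hn : 1 ≤ n) (lo hi : ℝ) (hL : lo ≤ L) (hU : (U : ℝ) ≤ hi) :
    1 - 2 * L * Real.exp (-(n / 2 ^ (L + 2))) - n / 2 ^ U ≤
    (Nat.card {κ : Composition n // lo ≤ (κ.blocks.toFinset.card : ℝ) ∧
      (κ.blocks.toFinset.card : ℝ) ≤ hi} : ℝ) / 2 ^ (n - 1) := by
  classical
  rw [Nat.card_eq_fintype_card, Fintype.card_subtype]
  set G := (univ : Finset (Composition n)).filter (fun κ => lo ≤ (κ.blocks.toFinset.card : ℝ) ∧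
      (κ.blocks.toFinset.card : ℝ) ≤ hi) with hG
  have hcov : (univ : Finset (Composition n)) ⊆ G ∪ ((Icc 1 L).biUnion
      (fun m => univ.filter (fun κ : Composition n => m ∉ κ.blocks)) ∪ B U n) := by
    intro κ _
    by_contra hκ
    simp only [mem_union, not_or, mem_biUnion, mem_filter, mem_univ, true_and, not_exists, not_and,
      hG, B, not_not, mem_Icc, not_lt] at hκ
    obtain ⟨h1, h2, h3⟩ := hκ
    have a : L ≤ κ.blocks.toFinset.card := by
      have : Icc 1 L ⊆ κ.blocks.toFinset := by
        intro m hm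
        rw [mem_Icc] at hm
        simpa using h2 m hm
      simpa using card_le_card this
    have b : κ.blocks.toFinset.card ≤ U := by
      have : κ.blocks.toFinset ⊆ Icc 1 U := by
        intro m hm
        rw [List.mem_toFinset] at hm
        exact mem_Icc.2 ⟨κ.blocks_pos hm, h3 m hm⟩
      simpa using card_le_card this
    refine h1 (hL.trans (by exact_mod_cast a)) (le_trans (by exact_mod_cast b) hU)
  have hcard := card_le_card hcov
  rw [card_univ, composition_card] at hcard
  have hcard2 : 2 ^ (n - 1) ≤ G.card + (∑ m ∈ Icc 1 L, (S m n).card + (B U n).card) := by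
    refine hcard.trans ((card_union_le _ _).trans ?_)
    refine Nat.add_le_add_left ((card_union_le _ _).trans ?_) _
    refine Nat.add_le_add_right (card_biUnion_le.trans ?_) _
    exact sum_le_sum fun m _ => (card_S m n).ge
  have hcard3 : (2 : ℝ) ^ (n - 1) ≤
      G.card + (∑ m ∈ Icc 1 L, ((S m n).card : ℝ) + (B U n).card) := by exact_mod_cast hcard2
  have hB : ((B U n).card : ℝ) ≤ n / 2 ^ U * 2 ^ (n - 1) := by
    have : ((B U n).card : ℝ) * 2 ^ U ≤ n * 2 ^ (n - 1) := by exact_mod_cast B_bound U n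
    rw [div_mul_eq_mul_div, le_div_iff₀ (by positivity)]
    exact this
  have h2n : (2 : ℝ) ^ n = 2 * 2 ^ (n - 1) := by
    rw [← pow_succ']; congr 1; omega
  have hS : ∑ m ∈ Icc 1 L, ((S m n).card : ℝ) ≤
      2 * L * Real.exp (-(n / 2 ^ (L + 2))) * 2 ^ (n - 1) := by
    have : ∀ m ∈ Icc 1 L, ((S m n).card : ℝ) ≤ 2 ^ n * Real.exp (-(n / 2 ^ (L + 2))) := by
      intro m hm
      rw [mem_Icc] at hm
      refine (S_bound m hm.1 n).trans ?_
      have e : (2 : ℝ) ^ n * Real.exp (-(n / 2 ^ (L + 2))) =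
          (2 * Real.exp (-(1 / 2 ^ (L + 2)))) ^ n := by
        rw [mul_pow, ← Real.exp_nat_mul]; congr 2; ring
      rw [e]
      have h1 : (1 : ℝ) / 2 ^ (L + 1) ≤ 1 / 2 ^ (m + 1) :=
        one_div_le_one_div_of_le (by positivity) (pow_le_pow_right₀ (by norm_num) (by omega))
      have h0 : (1 : ℝ) / 2 ^ (m + 1) ≤ 1 := by
        rw [div_le_one (by positivity)]; exact one_le_pow₀ (by norm_num)
      have h3 : (1 : ℝ) / 2 ^ (L + 1) = 2 * (1 / 2 ^ (L + 2)) := by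
        rw [pow_succ _ (L + 1)]; field_simp
      have h4 := Real.add_one_le_exp (-(1 / 2 ^ (L + 2)) : ℝ)
      refine pow_le_pow_left₀ (by linarith) ?_ n
      linarith
    refine (sum_le_sum this).trans ?_
    rw [sum_const, Nat.card_Icc, nsmul_eq_mul, h2n]
    simp only [Nat.add_sub_cancel]
    apply le_of_eq; ring
  rw [le_div_iff₀ (by positivity)]
  linarith

lemma card_le_one (n : ℕ) (P : Composition n → Prop) :
    (Nat.card {κ : Composition n // P κ} : ℝ) / 2 ^ (n - 1) ≤ 1 := by
  rw [div_le_one (by positivity)]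
  have : Nat.card {κ : Composition n // P κ} ≤ 2 ^ (n - 1) := by
    rw [← composition_card, ← Nat.card_eq_fintype_card]
    exact Nat.card_le_card_of_injective _ Subtype.val_injective
  exact_mod_cast this

lemma main_small (ε : ℝ) (hε : 0 < ε) (hε1 : ε ≤ 1) :
    Tendsto
      (fun n : ℕ =>
        (Nat.card {κ : Composition n //
            (1 - ε) * Real.logb 2 n ≤ (κ.blocks.toFinset.card : ℝ) ∧
            (κ.blocks.toFinset.card : ℝ) ≤ (1 + ε) * Real.logb 2 n} : ℝ) / 2 ^ (n - 1))
      atTop (nhds 1) := by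
  have hlim : Tendsto (fun n : ℕ => 1 - 4 * ((n : ℝ) * Real.exp (-(1 / 8) * (n : ℝ) ^ ε)) -
      2 * (n : ℝ) ^ (-ε)) atTop (nhds 1) := by
    have h1 : Tendsto (fun n : ℕ => (n : ℝ) ^ (-ε)) atTop (nhds 0) :=
      (tendsto_rpow_neg_atTop hε).comp tendsto_natCast_atTop_atTop
    have h2 : Tendsto (fun n : ℕ => (n : ℝ) ^ ε) atTop atTop :=
      (tendsto_rpow_atTop hε).comp tendsto_natCast_atTop_atTop
    have h3 := (tendsto_rpow_mul_exp_neg_mul_atTop_nhds_zero (1 / ε) (1 / 8) (by norm_num)).comp h2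
    have h4 : Tendsto (fun n : ℕ => (n : ℝ) * Real.exp (-(1 / 8) * (n : ℝ) ^ ε)) atTop
        (nhds 0) := by
      refine h3.congr fun n => ?_
      simp only [Function.comp]
      rw [← Real.rpow_mul (Nat.cast_nonneg n), mul_one_div_cancel hε.ne', Real.rpow_one]
    have := ((tendsto_const_nhds (x := (1 : ℝ))).sub (h4.const_mul 4)).sub (h1.const_mul 2)
    simpa using this
  refine tendsto_of_tendsto_of_tendsto_of_le_of_le' hlim tendsto_const_nhds ?_
    (Eventually.of_forall fun n => card_le_one n _)
  filter_upwards [eventually_ge_atTop 1] with n hn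
  have hn' : (1 : ℝ) ≤ n := by exact_mod_cast hn
  have hn0 : (0 : ℝ) < n := by linarith
  have hlog : 0 ≤ Real.logb 2 n := Real.logb_nonneg (by norm_num) hn'
  have hpow : ∀ a : ℝ, (2 : ℝ) ^ (a * Real.logb 2 n) = (n : ℝ) ^ a := by
    intro a
    rw [mul_comm, Real.rpow_mul (by norm_num), Real.rpow_logb (by norm_num) (by norm_num) hn0]
  set L := ⌈(1 - ε) * Real.logb 2 n⌉₊ with hLdef
  set U := ⌊(1 + ε) * Real.logb 2 n⌋₊ with hUdef
  refine le_trans ?_ (good_bound n L U hn _ _ (Nat.le_ceil _) (Nat.floor_le (by positivity)))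
  have hL : (2 : ℝ) ^ L ≤ 2 * (n : ℝ) ^ (1 - ε) := by
    have : (L : ℝ) ≤ (1 - ε) * Real.logb 2 n + 1 :=
      (Nat.ceil_lt_add_one (mul_nonneg (by linarith) hlog)).le
    have := Real.rpow_le_rpow_of_exponent_le (x := 2) (by norm_num) this
    rw [Real.rpow_natCast, Real.rpow_add (by norm_num), hpow, Real.rpow_one] at this
    linarith
  have hU : (n : ℝ) ^ (1 + ε) ≤ 2 * 2 ^ U := by
    have : (1 + ε) * Real.logb 2 n ≤ U + 1 := (Nat.lt_floor_add_one _).le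
    have := Real.rpow_le_rpow_of_exponent_le (x := 2) (by norm_num) this
    rw [Real.rpow_add (by norm_num), hpow, Real.rpow_one, Real.rpow_natCast] at this
    linarith
  have hUb : (n : ℝ) / 2 ^ U ≤ 2 * (n : ℝ) ^ (-ε) := by
    rw [div_le_iff₀ (by positivity)]
    have e : (n : ℝ) = (n : ℝ) ^ (-ε) * (n : ℝ) ^ (1 + ε) := by
      rw [← Real.rpow_add hn0]; simp
    have hp : 0 < (n : ℝ) ^ (-ε) := by positivity
    calc (n : ℝ) = (n : ℝ) ^ (-ε) * (n : ℝ) ^ (1 + ε) := e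
      _ ≤ (n : ℝ) ^ (-ε) * (2 * 2 ^ U) := by gcongr
      _ = _ := by ring
  have hLn : (L : ℝ) ≤ 2 * n := by
    have h1 : (L : ℝ) ≤ 2 ^ L := by exact_mod_cast Nat.lt_two_pow_self.le
    have h2 : (n : ℝ) ^ (1 - ε) ≤ n := by
      calc (n : ℝ) ^ (1 - ε) ≤ (n : ℝ) ^ (1 : ℝ) :=
            Real.rpow_le_rpow_of_exponent_le hn' (by linarith)
        _ = n := Real.rpow_one _
    linarith
  have hexp : Real.exp (-(n / 2 ^ (L + 2))) ≤ Real.exp (-(1 / 8) * (n : ℝ) ^ ε) := by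
    apply Real.exp_le_exp.2
    have : 1 / 8 * (n : ℝ) ^ ε ≤ n / 2 ^ (L + 2) := by
      rw [le_div_iff₀ (by positivity), pow_add]
      have e : (n : ℝ) ^ ε * (n : ℝ) ^ (1 - ε) = n := by
        rw [← Real.rpow_add hn0]; simp
      have hp : 0 < (n : ℝ) ^ ε := by positivity
      nlinarith [mul_le_mul_of_nonneg_left hL hp.le]
    linarith
  have : (L : ℝ) * Real.exp (-(n / 2 ^ (L + 2))) ≤
      2 * n * Real.exp (-(1 / 8) * (n : ℝ) ^ ε) := by gcongr
  linarith

end DPS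

/-- **Lemma 4.** The number of distinct part sizes of a uniformly random composition of `n`
is `(1 + o(1)) log₂ n` with probability `1 − o(1)`: for every `ε > 0`, the proportion of
compositions `κ` of `n` with `(1−ε) log₂ n ≤ |D(κ)| ≤ (1+ε) log₂ n` tends to `1`. -/
theorem distinct_part_sizes_concentration (ε : ℝ) (hε : 0 < ε) :
    Tendsto
      (fun n : ℕ =>
        (Nat.card {κ : Composition n //
            (1 - ε) * Real.logb 2 n ≤ (κ.blocks.toFinset.card : ℝ) ∧
            (κ.blocks.toFinset.card : ℝ) ≤ (1 + ε) * Real.logb 2 n} : ℝ) / 2 ^ (n - 1))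
      atTop (nhds 1) := by
  refine tendsto_of_tendsto_of_tendsto_of_le_of_le'
    (DPS.main_small (min ε 1) (lt_min hε one_pos) (min_le_right _ _)) tendsto_const_nhds ?_
    (Eventually.of_forall fun n => DPS.card_le_one n _)
  filter_upwards [eventually_ge_atTop 1] with n hn
  have hlog : 0 ≤ Real.logb 2 n := Real.logb_nonneg (by norm_num) (by exact_mod_cast hn)
  have hm : min ε 1 ≤ ε := min_le_left _ _
  gcongr
  refine Nat.card_le_card_of_injective
    (Subtype.map id fun κ h => ⟨le_trans ?_ h.1, h.2.trans ?_⟩)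
    (Subtype.map_injective _ Function.injective_id)
  · gcongr
  · gcongr
end

section
/- Fix an integer m ≥ 1. The expected number of part sizes of multiplicity m in a uniformly random composition of n, E(|M_m|) = 2^{-(n-1)} Σ_{κ composition of n} |M_m(κ)|, satisfies E(|M_m|) = (1 + o(1)) · (n^m/m!) · Σ_{k=1}^∞ 2^{-km} exp(−n/2^k) as n → ∞. -/
open Filter

lemma comp_sum_succ (n : ℕ) (F : List ℕ → ℝ) :
    ∑ κ : Composition (n+1), F κ.blocks =
      ∑ i ∈ Finset.range (n+1), ∑ κ : Composition (n - i), F ((i+1) :: κ.blocks) := by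
  rw [Finset.sum_sigma']
  symm
  refine Finset.sum_bij (fun (a : Σ i : ℕ, Composition (n - i)) ha =>
    (⟨(a.1+1) :: a.2.blocks, ?_, ?_⟩ : Composition (n+1))) ?_ ?_ ?_ ?_
  · intro i hi
    rcases List.mem_cons.1 hi with h | h
    · omega
    · exact a.2.blocks_pos h
  · have h1 : a.1 < n + 1 := by simpa using ha
    have := a.2.blocks_sum
    simp only [List.sum_cons]; omega
  · intros; simp
  · rintro ⟨i, κ⟩ h1 ⟨i', κ'⟩ h2 h
    simp only [Composition.mk.injEq, List.cons.injEq, Nat.add_right_cancel_iff] at h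
    obtain ⟨rfl, h⟩ := h
    have : κ = κ' := Composition.ext h
    rw [this]
  · intro κ _
    have hs := κ.blocks_sum
    rcases hb : κ.blocks with _ | ⟨b, l⟩
    · rw [hb] at hs; simp at hs
    · have hpos : 0 < b := κ.blocks_pos (by rw [hb]; simp)
      rw [hb] at hs
      simp only [List.sum_cons] at hs
      refine ⟨⟨b - 1, ⟨l, fun {i} hi => κ.blocks_pos (by rw [hb]; simp [hi]), by omega⟩⟩, ?_, ?_⟩
      · simp; omega
      · apply Composition.ext
        simp only [hb]
        congr 1
        omega
  · intros; rfl

noncomputable def TT (k r n : ℕ) : ℝ := ∑ κ : Composition n, ((κ.blocks.count k).choose r : ℝ)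

lemma TT_nonneg (k r n : ℕ) : 0 ≤ TT k r n := Finset.sum_nonneg (fun _ _ => by positivity)

lemma TT_zero (k n : ℕ) : TT k 0 n = 2 ^ (n - 1) := by
  simp [TT, composition_card]

lemma TT_succ_zero (k r : ℕ) : TT k (r+1) 0 = 0 := by
  unfold TT
  apply Finset.sum_eq_zero
  intro κ _
  have : κ.blocks = [] := by
    rcases hb : κ.blocks with _ | ⟨b, l⟩
    · rfl
    · have hpos : 0 < b := κ.blocks_pos (by rw [hb]; simp)
      have := κ.blocks_sum
      rw [hb] at this; simp at this; omega
  simp [this]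

lemma TT_rec (q r n : ℕ) : TT (q+1) (r+1) (n+1) =
    ∑ i ∈ Finset.range (n+1), TT (q+1) (r+1) i + if q ≤ n then TT (q+1) r (n - q) else 0 := by
  have h0 := comp_sum_succ n (fun l => ((l.count (q+1)).choose (r+1) : ℝ))
  have h1 : ∀ i ∈ Finset.range (n+1), ∑ κ : Composition (n - i),
      (((((i+1) :: κ.blocks).count (q+1)).choose (r+1) : ℕ) : ℝ) =
      TT (q+1) (r+1) (n - i) + if i = q then TT (q+1) r (n - i) else 0 := by
    intro i _
    split_ifs with h
    · subst h
      unfold TT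
      rw [← Finset.sum_add_distrib]
      refine Finset.sum_congr rfl fun κ _ => ?_
      rw [List.count_cons_self, Nat.choose_succ_succ]
      push_cast; ring
    · unfold TT
      rw [add_zero]
      refine Finset.sum_congr rfl fun κ _ => ?_
      rw [List.count_cons_of_ne (by omega)]
  unfold TT at h0 h1 ⊢
  rw [h0, Finset.sum_congr rfl h1, Finset.sum_add_distrib]
  congr 1
  · exact Finset.sum_range_reflect (fun i => ∑ κ : Composition i, (((κ.blocks.count (q+1)).choose (r+1) : ℕ) : ℝ)) (n+1)
  · rw [Finset.sum_ite_eq' (Finset.range (n+1)) q]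
    simp

lemma TT_small (q r n : ℕ) (h : n < (q+1) * (r+1)) : TT (q+1) (r+1) n = 0 := by
  induction n using Nat.strong_induction_on generalizing r with
  | _ n ih =>
    rcases n with _ | n
    · exact TT_succ_zero _ _
    · rw [TT_rec, Finset.sum_eq_zero, zero_add]
      · split_ifs with hq
        · rcases r with _ | r
          · omega
          · apply ih _ (by omega)
            have : (q+1)*(r+1+1) = (q+1)*(r+1) + (q+1) := by ring
            omega
        · rfl
      · intro i hi
        simp at hi
        exact ih i (by omega) r (by omega)

lemma TT_conv (q r n : ℕ) : 2 * TT (q+1) (r+1) (n+(q+1)) =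
    TT (q+1) r n + 2 ^ n * ∑ i ∈ Finset.range (n+1), TT (q+1) r i / 2 ^ i := by
  induction n with
  | zero =>
    have h : TT (q+1) (r+1) (0 + (q+1)) = TT (q+1) r 0 := by
      rw [zero_add, TT_rec, Finset.sum_eq_zero]
      · simp
      · intro i hi
        simp at hi
        apply TT_small
        nlinarith
    rw [h]; simp; ring
  | succ n ih =>
    have h1 := TT_rec q r (n+q)
    have h2 := TT_rec q r (n+1+q)
    rw [show n+1+q+1 = (n+q+1)+1 by ring, Finset.sum_range_succ, show n+q+1 = n+(q+1) by ring] at h2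
    rw [show n+q+1 = n+(q+1) by ring] at h1
    rw [if_pos (by omega)] at h1 h2
    rw [show n+q-q = n by omega] at h1
    rw [show n+1+q-q = n+1 by omega] at h2
    rw [show n+1+(q+1) = n+(q+1)+1 by ring, Finset.sum_range_succ, h2]
    have h3 : (2:ℝ)^(n+1) * (TT (q+1) r (n+1) / 2^(n+1)) = TT (q+1) r (n+1) := by field_simp
    rw [mul_add (2^(n+1) : ℝ), h3, pow_succ]
    linarith

noncomputable def SS (k r n : ℕ) : ℝ := 2 * TT k r n / 2 ^ n * 2 ^ ((k+1)*r)

lemma SS_nonneg (k r n : ℕ) : 0 ≤ SS k r n := by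
  have := TT_nonneg k r n
  unfold SS; positivity

lemma SS_conv (q r n : ℕ) : SS (q+1) (r+1) (n+(q+1)) =
    SS (q+1) r n + ∑ i ∈ Finset.range (n+1), SS (q+1) r i := by
  unfold SS
  rw [TT_conv, ← Finset.sum_mul]
  simp_rw [mul_div_assoc]
  rw [← Finset.mul_sum]
  rw [show (q+1+1)*(r+1) = (q+1+1)*r + (q+1) + 1 by ring]
  simp only [pow_add, pow_one]
  field_simp

lemma SS_zero_zero (k : ℕ) : SS k 0 0 = 2 := by simp [SS, TT_zero]
lemma SS_zero_succ (k n : ℕ) : SS k 0 (n+1) = 1 := by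
  simp [SS, TT_zero]; field_simp; ring

lemma SS_sum_shift (q r N : ℕ) : ∑ i ∈ Finset.range (N + (q+1)*r + 1), SS (q+1) r i =
    ∑ i ∈ Finset.range (N+1), SS (q+1) r (i + (q+1)*r) := by
  rw [show N + (q+1)*r + 1 = (q+1)*r + (N+1) by ring, Finset.sum_range_add, Finset.sum_eq_zero, zero_add]
  · exact Finset.sum_congr rfl fun i _ => by rw [add_comm i]
  · intro i hi
    rcases r with _ | r
    · simp at hi
    · unfold SS; rw [TT_small _ _ _ (by simpa using hi)]; simp

lemma SS_conv' (q r N : ℕ) : SS (q+1) (r+1) (N+(q+1)*(r+1)) =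
    SS (q+1) r (N+(q+1)*r) + ∑ i ∈ Finset.range (N+1), SS (q+1) r (i + (q+1)*r) := by
  rw [← SS_sum_shift, ← SS_conv]
  congr 1; ring

lemma SS_lower (q r N : ℕ) : (N.choose r : ℝ) ≤ SS (q+1) r (N+(q+1)*r) := by
  induction r generalizing N with
  | zero =>
    rcases N with _ | N
    · simp [SS_zero_zero]
    · simp [SS_zero_succ]
  | succ r ih =>
    rw [SS_conv']
    have h1 : ∀ N : ℕ, (N.choose (r+1) : ℝ) ≤ ∑ i ∈ Finset.range (N+1), SS (q+1) r (i + (q+1)*r) := by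
      intro N
      induction N with
      | zero => simp; exact SS_nonneg _ _ _
      | succ N ihN =>
        rw [Finset.sum_range_succ, Nat.choose_succ_succ]
        push_cast
        have := ih (N+1)
        have h3 : (N.choose r : ℝ) ≤ ((N+1).choose r : ℝ) := by
          exact_mod_cast Nat.choose_le_choose r (by omega)
        linarith
    have := h1 N
    have := SS_nonneg (q+1) r (N+(q+1)*r)
    linarith

lemma SS_upper (q r N : ℕ) : SS (q+1) (r+1) (N+(q+1)*(r+1)) ≤ ((N + 3*(r+1) + 1).choose (r+1) : ℝ) := by
  induction r generalizing N with
  | zero =>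
    rw [SS_conv']
    have h1 : ∀ N : ℕ, ∑ i ∈ Finset.range (N+1), SS (q+1) 0 (i + (q+1)*0) = N + 2 := by
      intro N
      induction N with
      | zero => simp [SS_zero_zero]
      | succ N ihN => rw [Finset.sum_range_succ, ihN]; simp [SS_zero_succ]; ring
    rw [h1]
    rcases N with _ | N
    · simp [SS_zero_zero]; norm_num
    · simp [SS_zero_succ]; linarith
  | succ r ih =>
    rw [SS_conv']
    have h1 : ∀ N : ℕ, ∑ i ∈ Finset.range (N+1), SS (q+1) (r+1) (i + (q+1)*(r+1)) ≤
        ((N + 3*(r+1)+2).choose (r+2) : ℝ) := by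
      intro N
      induction N with
      | zero =>
        rw [Finset.sum_range_one, Nat.choose_succ_succ]
        have := ih 0
        push_cast
        have h4 : (0:ℝ) ≤ ((0 + 3*(r+1)+1).choose (r+1+1) : ℝ) := by positivity
        linarith
      | succ N ihN =>
        rw [Finset.sum_range_succ, Nat.choose_succ_succ]
        have := ih (N+1)
        push_cast
        rw [show N + 1 + 3*(r+1)+1 = N+3*(r+1)+2 by ring] at *
        linarith
    have h2 := h1 N
    have h3 := ih N
    have h4 : ((N + 3*(r+1+1)+1).choose (r+1+1) : ℝ) ≥ ((N + 3*(r+1)+2 + 1).choose (r+1+1) : ℝ) := by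
      exact_mod_cast Nat.choose_le_choose _ (by omega)
    rw [Nat.choose_succ_succ (N + 3*(r+1)+2)] at h4
    have h5 : ((N + 3*(r+1)+2).choose (r+1) : ℝ) ≥ ((N + 3*(r+1)+1).choose (r+1) : ℝ) := by
      exact_mod_cast Nat.choose_le_choose _ (by omega)
    push_cast at *
    linarith

noncomputable def MM (k r n : ℕ) : ℝ := TT k r n / 2 ^ (n - 1)

lemma MM_nonneg (k r n : ℕ) : 0 ≤ MM k r n := by
  have := TT_nonneg k r n
  unfold MM; positivity

lemma MM_eq (k r n : ℕ) (hn : 1 ≤ n) : MM k r n = SS k r n / 2 ^ ((k+1)*r) := by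
  obtain ⟨n, rfl⟩ := Nat.exists_eq_add_of_le' hn
  unfold MM SS
  simp only [Nat.add_sub_cancel, pow_succ]
  field_simp

lemma MM_zero (k n : ℕ) : MM k 0 n = 1 := by
  simp [MM, TT_zero]

lemma MM_upper (k r n : ℕ) (hn : 1 ≤ n) (hk : 1 ≤ k) (hr : 1 ≤ r) (c : ℝ) (hc0 : 0 ≤ c)
    (hc : (n:ℝ) + (3 - k) * r + 1 ≤ c) : MM k r n ≤ (c / 2^(k+1))^r / r.factorial := by
  obtain ⟨q, rfl⟩ := Nat.exists_eq_add_of_le' hk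
  obtain ⟨r, rfl⟩ := Nat.exists_eq_add_of_le' hr
  by_cases h : n < (q+1) * (r+1)
  · unfold MM; rw [TT_small _ _ _ h]; simp; positivity
  · push Not at h
    obtain ⟨N, rfl⟩ := Nat.exists_eq_add_of_le' h
    rw [MM_eq _ _ _ hn, div_pow, pow_mul, div_right_comm]
    gcongr
    refine (SS_upper q r N).trans ?_
    refine (Nat.choose_le_pow_div _ _).trans ?_
    gcongr
    push_cast at hc ⊢
    linarith

lemma MM_upper1 (k r n : ℕ) (hn : 1 ≤ n) (hk : 1 ≤ k) (hr : 1 ≤ r) :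
    MM k r n ≤ (((n:ℝ) + 2 * r + 1) / 2^(k+1))^r / r.factorial := by
  apply MM_upper _ _ _ hn hk hr _ (by positivity)
  have : (1:ℝ) ≤ k := by exact_mod_cast hk
  have : (0:ℝ) ≤ r := by positivity
  nlinarith

lemma MM_upper2 (k r n : ℕ) (hn : 1 ≤ n) (hk : 3 ≤ k) :
    MM k r n ≤ (((n:ℝ) + 1) / 2^(k+1))^r / r.factorial := by
  rcases r with _ | r
  · simp [MM_zero]
  apply MM_upper _ _ _ hn (by omega) (by omega) _ (by positivity)
  have : (3:ℝ) ≤ k := by exact_mod_cast hk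
  have : (0:ℝ) ≤ ((r+1 : ℕ):ℝ) := by positivity
  nlinarith

lemma MM_lower (k r n : ℕ) (hn : 1 ≤ n) (hk : 1 ≤ k) (h : (k + 1) * r ≤ n) :
    (((n:ℝ) - (k+1) * r) / 2^(k+1))^r / r.factorial ≤ MM k r n := by
  obtain ⟨q, rfl⟩ := Nat.exists_eq_add_of_le' hk
  have h' : (q+1) * r ≤ n := by nlinarith
  obtain ⟨N, rfl⟩ := Nat.exists_eq_add_of_le' h'
  rw [MM_eq _ _ _ hn, div_pow, pow_mul, div_right_comm]
  gcongr
  refine le_trans ?_ (SS_lower q r N)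
  rw [div_le_iff₀ (by positivity), mul_comm (N.choose r : ℝ)]
  have h1 := Nat.pow_sub_le_descFactorial N r
  rw [Nat.descFactorial_eq_factorial_mul_choose] at h1
  have h2 : ((N + 1 - r : ℕ):ℝ)^r ≤ (r.factorial : ℝ) * (N.choose r : ℝ) := by exact_mod_cast h1
  refine le_trans ?_ h2
  have h3 : r ≤ N := by
    have : (q+1+1)*r = (q+1)*r + r := by ring
    omega
  have h3' : (r:ℝ) ≤ N := by exact_mod_cast h3
  rw [Nat.cast_sub (by omega)]
  push_cast
  apply pow_le_pow_left₀ <;> nlinarith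

noncomputable def PP (k m n : ℕ) : ℝ :=
  (∑ κ : Composition n, if κ.blocks.count k = m then (1:ℝ) else 0) / 2 ^ (n - 1)

lemma PP_nonneg (k m n : ℕ) : 0 ≤ PP k m n := by
  unfold PP
  apply div_nonneg _ (by positivity)
  exact Finset.sum_nonneg fun _ _ => by split_ifs <;> norm_num

lemma PP_le_one (k m n : ℕ) : PP k m n ≤ 1 := by
  rw [← MM_zero k n]
  unfold PP MM TT
  gcongr
  split_ifs <;> simp

lemma PP_le_MM (k m n : ℕ) (hm : 1 ≤ m) : PP k m n ≤ MM k 1 n := by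
  unfold PP MM TT
  gcongr with κ
  split_ifs with h
  · rw [h]; simpa using hm
  · positivity

lemma PP_zero (m n : ℕ) (hm : 1 ≤ m) : PP 0 m n = 0 := by
  unfold PP
  rw [Finset.sum_eq_zero, zero_div]
  intro κ _
  rw [if_neg]
  intro h
  have : 0 ∈ κ.blocks := List.count_pos_iff.1 (by omega)
  exact absurd (κ.blocks_pos this) (by omega)

lemma EE_hasSum (m n : ℕ) (hm : 1 ≤ m) : HasSum (fun k => PP k m n)
    ((∑ κ : Composition n,
      ((κ.blocks.toFinset.filter fun j => κ.blocks.count j = m).card : ℝ)) / 2 ^ (n - 1)) := by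
  unfold PP
  apply HasSum.div_const
  apply hasSum_sum
  intro κ _
  rw [Finset.card_eq_sum_ones, Nat.cast_sum, Finset.sum_filter]
  have := hasSum_sum_of_ne_finset_zero (L := SummationFilter.unconditional ℕ)
    (f := fun k => if κ.blocks.count k = m then (1:ℝ) else 0)
    (s := κ.blocks.toFinset) (by
      intro b hb
      rw [if_neg]
      intro h
      apply hb
      rw [List.mem_toFinset]
      exact List.count_pos_iff.1 (by omega))
  simp only [Nat.cast_one]
  exact this

lemma choose_hasSum (X m : ℕ) : HasSum (fun r : ℕ => (-1:ℝ)^(r+m) * (r.choose m) * (X.choose r))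
    (if X = m then 1 else 0) := by
  have h : ∀ r ∉ Finset.range (X+1), (-1:ℝ)^(r+m) * (r.choose m) * (X.choose r) = 0 := by
    intro r hr
    rw [Nat.choose_eq_zero_of_lt (n := X) (by simpa using hr)]; simp
  convert hasSum_sum_of_ne_finset_zero (L := SummationFilter.unconditional ℕ) h using 1
  by_cases hX : X < m
  · rw [if_neg (by omega), Finset.sum_eq_zero]
    intro r hr
    rw [Nat.choose_eq_zero_of_lt (n := r) (by simp at hr; omega)]; simp
  · obtain ⟨d, rfl⟩ := Nat.exists_eq_add_of_le (not_lt.1 hX)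
    rw [show m + d + 1 = m + (d+1) by ring, Finset.sum_range_add, Finset.sum_eq_zero, zero_add]
    · have h1 : ∀ x ∈ Finset.range (d+1), (-1:ℝ)^(m+x+m) * ((m+x).choose m) * ((m+d).choose (m+x))
          = ((m+d).choose m) * (((-1)^x * (d.choose x) : ℤ) : ℝ) := by
        intro x hx
        have h2 := Nat.choose_mul (n := m+d) (k := m+x) (s := m) (by omega)
        rw [show m + d - m = d by omega, show m + x - m = x by omega] at h2
        have h3 : ((m+d).choose (m+x) : ℝ) * ((m+x).choose m) = ((m+d).choose m) * (d.choose x) := by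
          exact_mod_cast h2
        have h4 : (-1:ℝ)^(m+x+m) = (-1)^x := by
          rw [show m+x+m = 2*m+x by ring, pow_add, pow_mul]; simp
        rw [h4]; push_cast
        linear_combination (-1)^x * h3
      rw [Finset.sum_congr rfl h1, ← Finset.mul_sum, ← Int.cast_sum, Int.alternating_sum_range_choose]
      rcases d with _ | d <;> simp
    · intro r hr
      rw [Nat.choose_eq_zero_of_lt (n := r) (by simpa using hr)]; simp

lemma PP_hasSum (k m n : ℕ) :
    HasSum (fun r : ℕ => (-1:ℝ)^(r+m) * (r.choose m) * MM k r n) (PP k m n) := by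
  unfold PP MM TT
  simp_rw [← mul_div_assoc, Finset.mul_sum]
  apply HasSum.div_const
  apply hasSum_sum
  intro κ _
  exact choose_hasSum _ _

noncomputable def ff (m : ℕ) (x : ℝ) : ℝ := x^m / m.factorial * Real.exp (-x)

lemma ff_hasSum (m : ℕ) (x : ℝ) :
    HasSum (fun r : ℕ => (-1:ℝ)^(r+m) * (r.choose m) * (x^r / r.factorial)) (ff m x) := by
  have h := (NormedSpace.expSeries_div_hasSum_exp (𝔸 := ℝ) (-x)).mul_left (x^m / m.factorial)
  rw [← Real.exp_eq_exp_ℝ] at h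
  have hinj : Function.Injective (fun s : ℕ => s + m) := add_left_injective m
  refine (hinj.hasSum_iff ?_).1 ?_
  · intro r hr
    rw [Nat.choose_eq_zero_of_lt]
    · simp
    · by_contra hc
      exact hr ⟨r - m, by simp; omega⟩
  · unfold ff
    refine Eq.mp (congrArg (fun g : ℕ → ℝ => HasSum g (x^m / m.factorial * Real.exp (-x))) ?_) h
    symm
    funext s
    show (-1:ℝ)^(s+m+m) * ((s+m).choose m) * (x^(s+m) / (s+m).factorial) = _
    have h1 : (s + m).choose m * (s.factorial * m.factorial) = (s+m).factorial := by
      have := Nat.add_choose_mul_factorial_mul_factorial s m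
      rw [← this]; ring
    have h2 : ((s + m).choose m : ℝ) = (s+m).factorial / (s.factorial * m.factorial) := by
      rw [eq_div_iff (by positivity)]; exact_mod_cast h1
    have h3 : (-1:ℝ)^(s+m+m) = (-1)^s := by
      rw [show s+m+m = 2*m+s by ring, pow_add, pow_mul]; simp
    rw [h2, h3, neg_pow x s]
    field_simp
    ring

lemma ff_nonneg (m : ℕ) (x : ℝ) (hx : 0 ≤ x) : 0 ≤ ff m x := by
  unfold ff; positivity

lemma pow_exp_le (m : ℕ) (x : ℝ) (hx : 0 ≤ x) : ff m x ≤ 1 := by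
  unfold ff
  rw [Real.exp_neg, ← div_eq_mul_inv, div_le_one (by positivity)]
  exact Real.pow_div_factorial_le_exp x hx m

lemma ff_le (m : ℕ) (hm : 1 ≤ m) (x : ℝ) (hx : 0 ≤ x) : ff m x ≤ x := by
  obtain ⟨m, rfl⟩ := Nat.exists_eq_add_of_le' hm
  have h := pow_exp_le m x hx
  have : ff (m+1) x = ff m x * (x / (m+1)) := by
    unfold ff; rw [Nat.factorial_succ]; push_cast; field_simp; ring
  rw [this]
  have h1 : x / (m+1) ≤ x := div_le_self hx (by linarith [(Nat.cast_nonneg m : (0:ℝ) ≤ m)])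
  have : 0 ≤ x / (m+1) := by positivity
  nlinarith [ff_nonneg m x hx]

lemma ff_le' (m : ℕ) (x : ℝ) (hx : 0 < x) : ff m x ≤ (m+1) / x := by
  have h := pow_exp_le (m+1) x hx.le
  have : ff (m+1) x = ff m x * (x / (m+1)) := by
    unfold ff; rw [Nat.factorial_succ]; push_cast; field_simp; ring
  rw [this] at h
  rw [le_div_iff₀ hx]
  have h2 : (0:ℝ) < m + 1 := by positivity
  rw [mul_div_assoc', div_le_one h2] at h
  exact h

lemma cheb (k m n : ℕ) : PP k m n * (MM k 1 n - m)^2 ≤ 2 * MM k 2 n + MM k 1 n - (MM k 1 n)^2 := by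
  set μ := MM k 1 n with hμ
  have h0 := MM_zero k n
  have key : (∑ κ : Composition n, ((κ.blocks.count k : ℝ) - μ)^2) / 2^(n-1)
      = 2 * MM k 2 n + MM k 1 n - 2 * μ * MM k 1 n + μ^2 * MM k 0 n := by
    unfold MM TT
    simp only [← mul_div_assoc, ← add_div, ← sub_div, Finset.mul_sum, ← Finset.sum_add_distrib,
      ← Finset.sum_sub_distrib]
    congr 1
    refine Finset.sum_congr rfl fun κ _ => ?_
    rw [Nat.cast_choose_two]
    simp
    ring
  have : PP k m n * (μ - m)^2 ≤ (∑ κ : Composition n, ((κ.blocks.count k : ℝ) - μ)^2) / 2^(n-1) := by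
    unfold PP
    rw [div_mul_eq_mul_div, Finset.sum_mul]
    gcongr with κ
    split_ifs with h
    · rw [h]; nlinarith
    · rw [zero_mul]; positivity
  rw [key, h0, ← hμ] at this
  linarith

lemma PP_le_lam (k m n : ℕ) (hm : 1 ≤ m) (hn : 1 ≤ n) : PP k m n ≤ 4 * (n / 2^(k+1)) := by
  rcases Nat.eq_zero_or_pos k with rfl | hk
  · rw [PP_zero _ _ hm]; positivity
  refine (PP_le_MM k m n hm).trans ((MM_upper1 k 1 n hn hk le_rfl).trans ?_)
  have : (1:ℝ) ≤ n := by exact_mod_cast hn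
  rw [← mul_div_assoc]
  simp only [pow_one, Nat.factorial_one, Nat.cast_one, div_one]
  gcongr
  linarith

lemma PP_le_inv (k m n : ℕ) (hm : 1 ≤ m) (hn : 1 ≤ n) (hkn : 2 * k ≤ n) :
    PP k m n ≤ (400 + 4 * m) / (n / 2^(k+1)) := by
  rcases Nat.eq_zero_or_pos k with rfl | hk
  · rw [PP_zero _ _ hm]; positivity
  have hn1 : (1:ℝ) ≤ n := by exact_mod_cast hn
  have hk1 : (1:ℝ) ≤ k := by exact_mod_cast hk
  have hkn1 : 2 * (k:ℝ) ≤ n := by exact_mod_cast hkn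
  set D : ℝ := 2^(k+1) with hD
  have hDpos : 0 < D := by positivity
  have hDk : (k:ℝ) + 1 ≤ D := by
    have := (Nat.lt_two_pow_self (n := k+1)).le
    rw [hD]; exact_mod_cast this
  set lam : ℝ := n / D with hlam
  have hl : 0 < lam := by positivity
  have hn' : (n:ℝ) = lam * D := by rw [hlam]; field_simp
  rw [le_div_iff₀ hl]
  have hP1 := PP_le_one k m n
  have hP0 := PP_nonneg k m n
  by_cases hc : lam < 4 * m
  · nlinarith
  push Not at hc
  have hM1u := MM_upper1 k 1 n hn hk le_rfl
  have hM2u := MM_upper1 k 2 n hn hk (by norm_num)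
  have hM1l := MM_lower k 1 n hn hk (by omega)
  rw [← hD] at hM1u hM2u hM1l
  simp only [pow_one, Nat.factorial_one, Nat.cast_one, div_one, Nat.factorial_two, Nat.cast_ofNat,
    mul_one] at hM1u hM2u hM1l
  have hch := cheb k m n
  set μ := MM k 1 n
  have e1 : μ ≤ 4 * lam := by
    refine hM1u.trans ?_
    rw [hlam, ← mul_div_assoc]; gcongr; linarith
  have hD4 : 4 ≤ D := by
    have : (2:ℝ)^2 ≤ 2^(k+1) := pow_le_pow_right₀ (by norm_num) (by omega)
    rw [hD]; linarith
  have e2 : lam - 1 ≤ μ := by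
    refine le_trans ?_ hM1l
    rw [sub_div, ← hlam]
    have : ((k:ℝ) + 1) / D ≤ 1 := (div_le_one hDpos).2 hDk
    linarith
  have e3 : 2 * MM k 2 n ≤ (lam + 2)^2 := by
    have h1 : ((n:ℝ) + 2 * 2 + 1) / D ≤ lam + 2 := by
      rw [add_assoc, add_div, ← hlam]
      have : ((2:ℝ) * 2 + 1) / D ≤ 2 := (div_le_iff₀ hDpos).2 (by linarith)
      linarith
    have h2 : (((n:ℝ) + 2 * 2 + 1) / D)^2 ≤ (lam + 2)^2 := by gcongr
    linarith
  have hm1 : (1:ℝ) ≤ m := by exact_mod_cast hm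
  have e4 : (lam - 1)^2 ≤ μ^2 := by apply pow_le_pow_left₀ <;> linarith
  have e5 : (lam/2)^2 ≤ (μ - m)^2 := by apply pow_le_pow_left₀ <;> linarith
  have e6 : PP k m n * (lam/2)^2 ≤ 11 * lam := by
    have := mul_le_mul_of_nonneg_left e5 hP0
    nlinarith
  have e7 : PP k m n * lam ≤ 44 := by
    have : (PP k m n * lam) * lam ≤ 44 * lam := by nlinarith
    exact le_of_mul_le_mul_right this hl
  linarith

lemma two_log_le (n : ℕ) (hn : 1 ≤ n) : 2 * Nat.log 2 n ≤ n := by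
  have h := Nat.pow_log_le_self 2 (show n ≠ 0 by omega)
  refine le_trans ?_ h
  generalize Nat.log 2 n = L
  induction L with
  | zero => simp
  | succ L ih =>
    rw [pow_succ]
    have : 1 ≤ 2^L := Nat.one_le_two_pow
    omega

/-- The difference for the term `k`. -/
noncomputable def dd (m n k : ℕ) : ℝ := PP k m n - ff m (n / 2^(k+1))

lemma dd_bound1 (m n k : ℕ) (hm : 1 ≤ m) (hn : 1 ≤ n) : |dd m n k| ≤ 4 * (n / 2^(k+1)) := by
  have h1 := PP_le_lam k m n hm hn
  have h2 := PP_nonneg k m n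
  have h3 : (0:ℝ) ≤ n / 2^(k+1) := by positivity
  have h4 := ff_le m hm _ h3
  have h5 := ff_nonneg m _ h3
  unfold dd
  rw [abs_le]; constructor <;> linarith

lemma dd_bound2 (m n k : ℕ) (hm : 1 ≤ m) (hn : 1 ≤ n) (hkn : 2 * k ≤ n) :
    |dd m n k| ≤ (400 + 4 * m) / (n / 2^(k+1)) := by
  have h1 := PP_le_inv k m n hm hn hkn
  have h2 := PP_nonneg k m n
  have hn1 : (1:ℝ) ≤ n := by exact_mod_cast hn
  have h3 : (0:ℝ) < n / 2^(k+1) := by positivity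
  have h4 := ff_le' m _ h3
  have h5 := ff_nonneg m _ h3.le
  have h6 : ((m:ℝ)+1) / (n / 2^(k+1)) ≤ (400 + 4 * m) / (n / 2^(k+1)) := by
    apply div_le_div_of_nonneg_right _ h3.le
    linarith [(Nat.cast_nonneg m : (0:ℝ) ≤ m)]
  unfold dd
  rw [abs_le]; constructor <;> linarith

/-- Poisson limit along a sequence of part sizes. -/
lemma dd_tendsto (m : ℕ) (K : ℕ → ℕ) (B : ℝ) (hK : Tendsto K atTop atTop)
    (hB : ∀ᶠ n : ℕ in atTop, (n:ℝ) / 2^(K n + 1) ≤ B)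
    (hKn : Tendsto (fun n : ℕ => (K n + 1 : ℝ) / n) atTop (nhds 0)) :
    Tendsto (fun n => dd m n (K n)) atTop (nhds 0) := by
  have hB0 : 0 ≤ B := by
    obtain ⟨n, hn⟩ := hB.exists
    exact le_trans (by positivity) hn
  have heq : ∀ n, dd m n (K n) = ∑' r : ℕ, ((-1:ℝ)^(r+m) * (r.choose m) *
      (MM (K n) r n - ((n:ℝ) / 2^(K n+1))^r / r.factorial)) := by
    intro n
    have := (PP_hasSum (K n) m n).sub (ff_hasSum m (n / 2^(K n+1)))
    unfold dd
    rw [← this.tsum_eq]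
    congr 1; ext r; ring
  simp_rw [heq]
  have hz : (0:ℝ) = ∑' r : ℕ, (0:ℝ) := by simp
  rw [hz]
  have hub : ∀ᶠ n : ℕ in atTop, ∀ r, MM (K n) r n ≤ (((n:ℝ) + 1) / 2^(K n+1))^r / r.factorial := by
    filter_upwards [eventually_ge_atTop 1, hK.eventually_ge_atTop 3] with n hn hk r
    exact MM_upper2 _ _ _ hn hk
  apply tendsto_tsum_of_dominated_convergence (bound := fun r : ℕ => (4 * B)^r / r.factorial)
  · exact Real.summable_pow_div_factorial _
  · intro r
    rw [show (0:ℝ) = (-1:ℝ)^(r+m) * (r.choose m) * 0 by simp]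
    apply Tendsto.const_mul
    -- squeeze
    have hup : Tendsto (fun n : ℕ => B^r / r.factorial * |(1 + 1 / (n:ℝ))^r - 1|) atTop (nhds 0) := by
      have h1 : Tendsto (fun n : ℕ => 1 / (n:ℝ)) atTop (nhds 0) := tendsto_one_div_atTop_nhds_zero_nat
      have h2 := ((((h1.const_add 1).pow r).sub_const 1).abs).const_mul (B^r / r.factorial)
      simpa using h2
    have hlo : Tendsto (fun n : ℕ => B^r / r.factorial * |(1 - (K n + 1 : ℝ) / n * r)^r - 1|) atTop (nhds 0) := by
      have h2 := (((((hKn.mul_const (r:ℝ)).const_sub 1).pow r).sub_const 1).abs).const_mul (B^r / r.factorial)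
      simpa using h2
    have hsum := hup.add hlo
    rw [add_zero] at hsum
    apply squeeze_zero_norm' _ hsum
    have hev : ∀ᶠ n : ℕ in atTop, (K n + 1 : ℝ) / n < 1 / (r + 1) :=
      hKn.eventually_lt_const (by positivity)
    filter_upwards [hub, hB, hev, eventually_ge_atTop 1, hK.eventually_ge_atTop 1] with n h1 h2 h3 h4 h5
    have h1 := h1 r
    have hn0 : (0:ℝ) < n := by exact_mod_cast h4
    have h6 : (K n + 1) * r ≤ n := by
      rw [div_lt_div_iff₀ hn0 (by positivity)] at h3
      have : ((K n + 1) * r : ℝ) ≤ n := by nlinarith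
      exact_mod_cast this
    have h7 := MM_lower (K n) r n h4 h5 h6
    set lam : ℝ := (n:ℝ) / 2^(K n + 1) with hlam
    have hl : 0 ≤ lam := by positivity
    have e1 : ((n:ℝ) + 1) / 2^(K n+1) = lam * (1 + 1 / n) := by
      rw [hlam]; field_simp
    have e2 : ((n:ℝ) - (K n + 1) * r) / 2^(K n+1) = lam * (1 - (K n + 1 : ℝ) / n * r) := by
      rw [hlam]; field_simp
    rw [e1, mul_pow] at h1
    rw [e2, mul_pow] at h7
    have hlB : lam^r / r.factorial ≤ B^r / r.factorial := by gcongr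
    have hl0 : 0 ≤ lam^r / r.factorial := by positivity
    set u := (1 + 1 / (n:ℝ))^r
    set v := (1 - (K n + 1 : ℝ) / n * r)^r
    rw [mul_div_right_comm] at h1 h7
    have e3 : lam^r / r.factorial * |u - 1| ≤ B^r / r.factorial * |u - 1| := by gcongr
    have e4 : lam^r / r.factorial * |v - 1| ≤ B^r / r.factorial * |v - 1| := by gcongr
    have e5 := mul_le_mul_of_nonneg_left (le_abs_self (u-1)) hl0
    have e6 := mul_le_mul_of_nonneg_left (neg_abs_le (v-1)) hl0
    have e7 : 0 ≤ B^r / r.factorial * |u - 1| := by positivity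
    have e8 : 0 ≤ B^r / r.factorial * |v - 1| := by positivity
    rw [Real.norm_eq_abs, abs_le]
    constructor <;> nlinarith
  · filter_upwards [hub, hB, eventually_ge_atTop 1] with n h1 h2 h3 r
    have h1 := h1 r
    have hn0 : (1:ℝ) ≤ n := by exact_mod_cast h3
    set lam : ℝ := (n:ℝ) / 2^(K n + 1) with hlam
    have hl : 0 ≤ lam := by positivity
    have e1 : ((n:ℝ) + 1) / 2^(K n+1) ≤ 2 * B := by
      have : ((n:ℝ) + 1) / 2^(K n+1) ≤ 2 * lam := by
        rw [hlam, ← mul_div_assoc]; gcongr; linarith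
      linarith
    have e2 : (((n:ℝ) + 1) / 2^(K n+1))^r / r.factorial ≤ (2*B)^r / r.factorial := by gcongr
    have e3 : lam^r / r.factorial ≤ (2*B)^r / r.factorial := by gcongr; linarith
    have e4 := MM_nonneg (K n) r n
    have e5 : 0 ≤ lam^r / r.factorial := by positivity
    have e6 : |MM (K n) r n - lam^r / r.factorial| ≤ (2*B)^r / r.factorial := by
      rw [abs_le]; constructor <;> linarith
    have e7 : (r.choose m : ℝ) ≤ 2^r := by exact_mod_cast Nat.choose_le_two_pow r m
    rw [Real.norm_eq_abs, abs_mul, abs_mul, abs_pow, abs_neg, abs_one, one_pow, one_mul, Nat.abs_cast]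
    calc _ ≤ (2:ℝ)^r * ((2*B)^r / r.factorial) := by gcongr
      _ = _ := by rw [← mul_div_assoc, ← mul_pow]; ring_nf

lemma log_bounds (n : ℕ) (hn : 1 ≤ n) :
    (2:ℝ)^(Nat.log 2 n) ≤ n ∧ (n:ℝ) < 2 * 2^(Nat.log 2 n) := by
  constructor
  · exact_mod_cast Nat.pow_log_le_self 2 (show n ≠ 0 by omega)
  · have := Nat.lt_pow_succ_log_self (b := 2) (by norm_num) n
    rw [Nat.succ_eq_add_one, pow_succ] at this
    rw [mul_comm]
    exact_mod_cast this

noncomputable def hh (m n : ℕ) (j : ℤ) : ℝ :=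
  if 0 ≤ (Nat.log 2 n : ℤ) + j then dd m n ((Nat.log 2 n : ℤ) + j).toNat else 0

lemma hh_tsum (m n : ℕ) : ∑' j : ℤ, hh m n j = ∑' k : ℕ, dd m n k := by
  have hinj : Function.Injective (fun k : ℕ => (k:ℤ) - Nat.log 2 n) := by
    intro a b h; simp at h; exact h
  rw [← hinj.tsum_eq]
  · congr 1; ext k; unfold hh; simp
  · intro j hj
    by_contra hc
    apply hj
    unfold hh
    rw [if_neg]
    intro h
    exact hc ⟨((Nat.log 2 n : ℤ) + j).toNat, by simp only []; omega⟩

lemma lam_zpow (n k : ℕ) (j : ℤ) (hn : 1 ≤ n) (hk : (k:ℤ) = Nat.log 2 n + j) :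
    (n:ℝ) / 2^(k+1) ≤ (2:ℝ)^(-j) ∧ (2:ℝ)^(-j) / 2 ≤ (n:ℝ) / 2^(k+1) := by
  obtain ⟨h1, h2⟩ := log_bounds n hn
  have hk' : (2:ℝ)^(k+1) = 2 * (2^(Nat.log 2 n) * (2:ℝ)^j) := by
    rw [pow_succ, mul_comm, ← zpow_natCast, hk, zpow_add₀ (by norm_num), zpow_natCast]
  rw [hk', zpow_neg]
  have hj : (0:ℝ) < 2^j := by positivity
  have hL : (0:ℝ) < 2^(Nat.log 2 n) := by positivity
  constructor
  · rw [div_le_iff₀ (by positivity)]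
    field_simp
    linarith
  · rw [le_div_iff₀ (by positivity)]
    field_simp
    linarith

lemma sum_dd (m : ℕ) (hm : 1 ≤ m) : Tendsto (fun n => ∑' k : ℕ, dd m n k) atTop (nhds 0) := by
  simp_rw [← hh_tsum]
  have hz : (0:ℝ) = ∑' j : ℤ, (0:ℝ) := by simp
  rw [hz]
  have hlog : Tendsto (fun n => Nat.log 2 n) atTop atTop := by
    rw [tendsto_atTop]
    intro b
    filter_upwards [eventually_ge_atTop (2^b)] with n hn
    exact Nat.le_log_of_pow_le (by norm_num) hn
  apply tendsto_tsum_of_dominated_convergence (bound := fun j : ℤ => (800 + 8 * m : ℝ) * (1/2)^(j.natAbs))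
  · apply Summable.mul_left
    have : Summable (fun n : ℕ => (1/2:ℝ)^n) := summable_geometric_two
    apply Summable.of_nat_of_neg <;> simpa using this
  · intro j
    have hK : Tendsto (fun n => ((Nat.log 2 n : ℤ) + j).toNat) atTop atTop := by
      rw [tendsto_atTop]
      intro b
      filter_upwards [hlog.eventually_ge_atTop (b + j.natAbs)] with n hn
      omega
    have h := dd_tendsto m (fun n => ((Nat.log 2 n : ℤ) + j).toNat) ((2:ℝ)^(-j)) hK ?_ ?_
    · refine h.congr' ?_
      filter_upwards [hlog.eventually_ge_atTop (j.natAbs)] with n hn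
      unfold hh
      rw [if_pos (by omega)]
    · filter_upwards [hlog.eventually_ge_atTop (j.natAbs), eventually_ge_atTop 1] with n hn h1
      exact (lam_zpow n _ j h1 (by omega)).1
    · have hlim : Tendsto (fun n : ℕ => (Real.log n / n) * (1 / Real.log 2) + (j.natAbs + 1 : ℝ) * (1 / (n:ℝ)))
          atTop (nhds 0) := by
        have h1 : Tendsto (fun n : ℕ => Real.log n / n) atTop (nhds 0) := by
          have := Real.isLittleO_log_id_atTop.tendsto_div_nhds_zero
          exact this.comp tendsto_natCast_atTop_atTop
        have h2 : Tendsto (fun n : ℕ => 1 / (n:ℝ)) atTop (nhds 0) := tendsto_one_div_atTop_nhds_zero_nat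
        simpa using (h1.mul_const (1 / Real.log 2)).add (h2.const_mul (j.natAbs + 1 : ℝ))
      apply squeeze_zero' _ _ hlim
      · exact Eventually.of_forall fun n => by positivity
      · filter_upwards [eventually_ge_atTop 1] with n h1
        have hn0 : (0:ℝ) < n := by exact_mod_cast h1
        have h2 : (Nat.log 2 n : ℝ) ≤ Real.log n / Real.log 2 := by
          rw [le_div_iff₀ (Real.log_pos (by norm_num)), ← Real.log_pow]
          exact Real.log_le_log (by positivity) (log_bounds n h1).1
        have h3 : (((Nat.log 2 n : ℤ) + j).toNat : ℝ) ≤ (Nat.log 2 n : ℝ) + j.natAbs := by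
          have : ((Nat.log 2 n : ℤ) + j).toNat ≤ Nat.log 2 n + j.natAbs := by omega
          exact_mod_cast this
        have h4 : Real.log n / n * (1 / Real.log 2) + (j.natAbs + 1 : ℝ) * (1 / (n:ℝ)) =
            (Real.log n / Real.log 2 + j.natAbs + 1) / n := by
          field_simp; try ring
        rw [h4]
        gcongr
        linarith
  · filter_upwards [eventually_ge_atTop 1] with n hn j
    unfold hh
    split_ifs with h
    · have hk : ((((Nat.log 2 n : ℤ) + j).toNat : ℕ) : ℤ) = Nat.log 2 n + j := by omega
      obtain ⟨l1, l2⟩ := lam_zpow n _ j hn hk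
      set k := ((Nat.log 2 n : ℤ) + j).toNat
      rw [Real.norm_eq_abs]
      have hm0 : (0:ℝ) ≤ m := by positivity
      rcases le_or_gt 0 j with hj | hj
      · refine (dd_bound1 m n k hm hn).trans ?_
        have : (2:ℝ)^(-j) = (1/2)^(j.natAbs) := by
          rw [one_div, inv_pow, zpow_neg, ← zpow_natCast]
          congr 2; omega
        rw [this] at l1
        have : (0:ℝ) ≤ (1/2)^(j.natAbs) := by positivity
        nlinarith
      · have h2k := two_log_le n hn
        refine (dd_bound2 m n k hm hn (by omega)).trans ?_
        have : (2:ℝ)^(-j) = 2^(j.natAbs) := by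
          rw [← zpow_natCast]
          congr 1; omega
        rw [this] at l2
        calc _ ≤ (400 + 4 * m : ℝ) / (2^(j.natAbs) / 2) := by gcongr
          _ = _ := by rw [one_div, inv_pow]; field_simp; ring
    · rw [norm_zero]; positivity

lemma ff_summable (m n : ℕ) (hm : 1 ≤ m) : Summable (fun k : ℕ => ff m (n / 2^(k+1))) := by
  refine Summable.of_nonneg_of_le (fun k => ff_nonneg m _ (by positivity))
    (fun k => ff_le m hm _ (by positivity)) ?_
  have : Summable (fun k : ℕ => (n:ℝ)/2 * (1/2:ℝ)^k) := summable_geometric_two.mul_left _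
  refine this.congr fun k => ?_
  rw [one_div, inv_pow, pow_succ]; field_simp

lemma rhs_eq (m n : ℕ) : ((n : ℝ) ^ m / m.factorial) *
      ∑' k : ℕ+, (1 / (2 : ℝ) ^ ((k : ℕ) * m)) * Real.exp (-(n : ℝ) / 2 ^ (k : ℕ)) =
    ∑' k : ℕ, ff m (n / 2^(k+1)) := by
  rw [tsum_pnat_eq_tsum_succ (f := fun k : ℕ => (1 / (2 : ℝ) ^ (k * m)) * Real.exp (-(n : ℝ) / 2 ^ k)),
    ← tsum_mul_left]
  congr 1; ext k
  unfold ff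
  rw [div_pow, ← pow_mul, neg_div]
  field_simp

lemma rhs_lower (m n : ℕ) (hm : 1 ≤ m) (hn : 2 ≤ n) :
    Real.exp (-2) / m.factorial ≤ ∑' k : ℕ, ff m (n / 2^(k+1)) := by
  have hL : 1 ≤ Nat.log 2 n := Nat.log_pos (by norm_num) hn
  refine le_trans ?_ ((ff_summable m n hm).le_tsum (Nat.log 2 n - 1)
    (fun k _ => ff_nonneg m _ (by positivity)))
  rw [Nat.sub_add_cancel hL]
  obtain ⟨h1, h2⟩ := log_bounds n (by omega)
  have hp : (0:ℝ) < 2^(Nat.log 2 n) := by positivity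
  have h3 : (1:ℝ) ≤ n / 2^(Nat.log 2 n) := (one_le_div hp).2 h1
  have h4 : (n:ℝ) / 2^(Nat.log 2 n) ≤ 2 := (div_le_iff₀ hp).2 h2.le
  unfold ff
  rw [div_mul_eq_mul_div]
  gcongr
  have h5 := one_le_pow₀ h3 (n := m)
  have h6 : Real.exp (-2) ≤ Real.exp (-(n / 2^(Nat.log 2 n) : ℝ)) := Real.exp_le_exp.2 (by linarith)
  nlinarith [Real.exp_pos (-2)]

/-- **Lemma 5.** For fixed `m ≥ 1`, the expected number of part sizes of multiplicity `m` in
a uniformly random composition of `n` satisfies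
`E(|M_m|) = (1 + o(1)) (n^m/m!) Σ_{k≥1} 2^{-km} exp(−n/2^k)` as `n → ∞`. -/
theorem expected_number_multiplicity_m (m : ℕ) (hm : 1 ≤ m) :
    ∃ ε : ℕ → ℝ, Tendsto ε atTop (nhds 0) ∧
      ∀ᶠ n : ℕ in atTop,
        (∑ κ : Composition n,
            ((κ.blocks.toFinset.filter fun j => κ.blocks.count j = m).card : ℝ)) / 2 ^ (n - 1) =
          (1 + ε n) *
            (((n : ℝ) ^ m / m.factorial) *
              ∑' k : ℕ+, (1 / (2 : ℝ) ^ ((k : ℕ) * m)) * Real.exp (-(n : ℝ) / 2 ^ (k : ℕ))) := by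
  refine ⟨fun n => (∑' k : ℕ, dd m n k) / (∑' k : ℕ, ff m (n / 2^(k+1))), ?_, ?_⟩
  · have h := ((sum_dd m hm).abs).div_const (Real.exp (-2) / m.factorial)
    rw [abs_zero, zero_div] at h
    apply squeeze_zero_norm' _ h
    filter_upwards [eventually_ge_atTop 2] with n hn
    have h1 := rhs_lower m n hm hn
    have h2 : 0 < Real.exp (-2) / m.factorial := by positivity
    rw [Real.norm_eq_abs, abs_div, abs_of_pos (h2.trans_le h1)]
    gcongr
  · filter_upwards [eventually_ge_atTop 2] with n hn
    rw [rhs_eq]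
    have h1 := rhs_lower m n hm hn
    have h2 : 0 < Real.exp (-2) / m.factorial := by positivity
    have h3 := h2.trans_le h1
    have h4 := (EE_hasSum m n hm).sub (ff_summable m n hm).hasSum
    have h5 : ∑' k : ℕ, dd m n k = _ := h4.tsum_eq
    rw [h5]
    field_simp
    ring
end

section
/- Fix an integer m ≥ 1 and set σ = m − 1/2. For every real number x > 0, Σ_{k=1}^∞ 2^{-km} exp(−x/2^k) = (1/2π) ∫_{-∞}^{∞} x^{-(σ+it)} Γ(σ+it) / (2^{m−σ−it} − 1) dt, where the integral is the absolutely convergent Lebesgue integral over the vertical line Re z = σ and Γ is the complex gamma function. -/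
open MeasureTheory Complex

lemma norm_Gamma_le (s : ℂ) (hs : 0 < s.re) : ‖Complex.Gamma s‖ ≤ Real.Gamma s.re := by
  rw [Complex.Gamma_eq_integral hs, Real.Gamma_eq_integral hs, Complex.GammaIntegral]
  refine (norm_integral_le_integral_norm _).trans (le_of_eq ?_)
  refine setIntegral_congr_fun measurableSet_Ioi fun t ht => ?_
  have ht : 0 < t := ht
  simp only [norm_mul]
  rw [Complex.norm_cpow_eq_rpow_re_of_pos ht]
  rw [Complex.norm_real, Real.norm_of_nonneg (Real.exp_pos _).le, Complex.sub_re, Complex.one_re, mul_comm]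

lemma vert_re (σ t : ℝ) : ((σ : ℂ) + t * I).re = σ := by simp

lemma norm_Gamma_decay (σ : ℝ) (hσ : 1 / 2 ≤ σ) (t : ℝ) :
    ‖Complex.Gamma (σ + t * I)‖ ≤ 4 * Real.Gamma (σ + 2) * (1 + t ^ 2)⁻¹ := by
  set s : ℂ := σ + t * I with hs
  have hre : s.re = σ := vert_re σ t
  have him : s.im = t := by simp [hs]
  have hs0 : s ≠ 0 := fun h => by rw [h] at hre; simp at hre; linarith
  have hs1 : s + 1 ≠ 0 := fun h => by
    have := congrArg Complex.re h; simp [hre] at this; linarith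
  have h2 : Complex.Gamma (s + 2) = (s + 1) * (s * Complex.Gamma s) := by
    rw [show s + 2 = (s + 1) + 1 by ring, Complex.Gamma_add_one _ hs1, Complex.Gamma_add_one _ hs0]
  have hb := norm_Gamma_le (s + 2) (by simp [hre]; linarith)
  rw [h2, norm_mul, norm_mul] at hb
  have h3 : (s + 2).re = σ + 2 := by simp [hre]
  rw [h3] at hb
  have n1 : ‖s‖ ^ 2 = σ ^ 2 + t ^ 2 := by
    rw [Complex.sq_norm, Complex.normSq_apply, hre, him]; ring
  have n2 : ‖s + 1‖ ^ 2 = (σ + 1) ^ 2 + t ^ 2 := by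
    rw [Complex.sq_norm, Complex.normSq_apply]; simp [hre, him]; ring
  have n3 : ‖s‖ ≤ ‖s + 1‖ := by
    apply le_of_sq_le_sq _ (norm_nonneg _)
    rw [n1, n2]; nlinarith
  have n4 : (1 + t ^ 2) / 4 ≤ ‖s + 1‖ * ‖s‖ := by
    have : ‖s‖ * ‖s‖ ≤ ‖s + 1‖ * ‖s‖ := by gcongr
    nlinarith [sq_nonneg t]
  rw [← div_eq_mul_inv, le_div_iff₀ (by positivity)]
  have := mul_le_mul_of_nonneg_right n4 (norm_nonneg (Complex.Gamma s))
  nlinarith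

lemma cont_Gamma_vert (σ : ℝ) (hσ : 0 < σ) :
    Continuous (fun t : ℝ => Complex.Gamma (σ + t * I)) := by
  rw [continuous_iff_continuousAt]
  intro t
  have : ContinuousAt Complex.Gamma (σ + t * I) := by
    refine (Complex.differentiableAt_Gamma _ fun n h => ?_).continuousAt
    have h := congrArg Complex.re h
    have : (0 : ℝ) ≤ n := by positivity
    simp at h; linarith
  exact ContinuousAt.comp (f := fun t : ℝ => (σ : ℂ) + t * I) this (by fun_prop)

lemma vertInt_Gamma (σ : ℝ) (hσ : 1 / 2 ≤ σ) :
    Integrable (fun t : ℝ => Complex.Gamma (σ + t * I)) := by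
  refine Integrable.mono' (integrable_inv_one_add_sq.const_mul (4 * Real.Gamma (σ + 2)))
    (cont_Gamma_vert σ (by linarith)).aestronglyMeasurable (Filter.Eventually.of_forall ?_)
  exact fun t => norm_Gamma_decay σ hσ t

lemma mellin_exp_eq (s : ℂ) (hs : 0 < s.re) :
    mellin (fun x : ℝ => ((Real.exp (-x) : ℝ) : ℂ)) s = Complex.Gamma s := by
  rw [← Complex.GammaIntegral_eq_mellin, Complex.Gamma_eq_integral hs]

lemma inv_exp (σ : ℝ) (hσ : 1 / 2 ≤ σ) (x : ℝ) (hx : 0 < x) :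
    (∫ t : ℝ, (x : ℂ) ^ (-((σ : ℂ) + t * I)) * Complex.Gamma (σ + t * I)) =
      2 * Real.pi * (Real.exp (-x) : ℝ) := by
  have he : ∀ t : ℝ, mellin (fun x : ℝ => ((Real.exp (-x) : ℝ) : ℂ)) (σ + t * I) =
      Complex.Gamma (σ + t * I) := fun t => mellin_exp_eq _ (by rw [vert_re]; linarith)
  have h := mellinInv_mellin_eq σ (fun x : ℝ => ((Real.exp (-x) : ℝ) : ℂ)) hx ?_ ?_ ?_
  · unfold mellinInv at h
    simp only [he, smul_eq_mul] at h
    rw [← h, Complex.real_smul, ← mul_assoc]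
    have : (Real.pi : ℂ) ≠ 0 := by exact_mod_cast Real.pi_ne_zero
    have h1 : (2 * (Real.pi : ℂ)) * ((1 / (2 * Real.pi) : ℝ) : ℂ) = 1 := by
      push_cast; field_simp
    rw [h1, one_mul]
  · have := Complex.GammaIntegral_convergent (s := σ) (by simp; linarith)
    unfold MellinConvergent
    simpa [mul_comm] using this
  · unfold Complex.VerticalIntegrable
    simp only [he]
    exact vertInt_Gamma σ hσ
  · fun_prop

lemma cpow_vert_norm (x : ℝ) (hx : 0 < x) (σ t : ℝ) :
    ‖(x : ℂ) ^ (-((σ : ℂ) + t * I))‖ = x ^ (-σ) := by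
  rw [Complex.norm_cpow_eq_rpow_re_of_pos hx]; simp

lemma cont_cpow (x : ℝ) (hx : 0 < x) (σ : ℝ) :
    Continuous (fun t : ℝ => (x : ℂ) ^ (-((σ : ℂ) + t * I))) := by
  have : (x : ℂ) ≠ 0 := by exact_mod_cast hx.ne'
  exact Continuous.const_cpow (by fun_prop) (Or.inl this)

theorem aux (m : ℕ) (σ : ℝ) (hσ : 1 / 2 ≤ σ) (hm : (m : ℝ) = σ + 1 / 2) (x : ℝ) (hx : 0 < x) :
    Integrable (fun t : ℝ =>
      (x : ℂ) ^ (-((σ : ℂ) + t * I)) * Complex.Gamma ((σ : ℂ) + t * I) /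
        ((2 : ℂ) ^ ((m : ℂ) - (σ : ℂ) - t * I) - 1)) ∧
    ((∑' k : ℕ+, (1 / (2 : ℝ) ^ ((k : ℕ) * m)) * Real.exp (-x / 2 ^ (k : ℕ)) : ℝ) : ℂ) =
      (1 / (2 * Real.pi)) *
        ∫ t : ℝ,
          (x : ℂ) ^ (-((σ : ℂ) + t * I)) * Complex.Gamma ((σ : ℂ) + t * I) /
            ((2 : ℂ) ^ ((m : ℂ) - (σ : ℂ) - t * I) - 1) := by
  set G : ℝ → ℂ := fun t => (x : ℂ) ^ (-((σ : ℂ) + t * I)) * Complex.Gamma ((σ : ℂ) + t * I) with hG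
  set w : ℝ → ℂ := fun t => (2 : ℂ) ^ ((m : ℂ) - (σ : ℂ) - t * I) with hw
  have hGi : Integrable G := by
    refine Integrable.bdd_mul (c := x ^ (-σ)) (vertInt_Gamma σ hσ)
      (cont_cpow x hx σ).aestronglyMeasurable (Filter.Eventually.of_forall fun t => ?_)
    exact (cpow_vert_norm x hx σ t).le
  have hwn : ∀ t, ‖w t‖ = √2 := by
    intro t
    have := Complex.norm_cpow_eq_rpow_re_of_pos (x := 2) (by norm_num) ((m : ℂ) - (σ : ℂ) - t * I)
    simp only [hw]
    rw [Real.sqrt_eq_rpow]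
    have h1 : ((m : ℂ) - (σ : ℂ) - t * I).re = 1 / 2 := by
      simp only [Complex.sub_re, Complex.natCast_re, Complex.ofReal_re, Complex.re_ofReal_mul,
        Complex.I_re, hm]
      ring
    rw [h1] at this
    simpa using this
  have hs2 : 1 < √2 := by rw [Real.lt_sqrt] <;> norm_num
  have hwc : Continuous w := by
    exact Continuous.const_cpow (by fun_prop) (Or.inl two_ne_zero)
  have hw0 : ∀ t, w t ≠ 0 := fun t h => by
    have := hwn t; rw [h, norm_zero] at this; linarith
  have hw1 : ∀ t, w t - 1 ≠ 0 := fun t h => by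
    have := hwn t; rw [sub_eq_zero.1 h, norm_one] at this; linarith
  let f : ℕ → ℝ → ℂ := fun k t => (w t)⁻¹ ^ (k + 1) * G t
  have hfi : ∀ k, Integrable (f k) := by
    intro k
    refine Integrable.bdd_mul (c := (√2)⁻¹ ^ (k + 1)) hGi
      ((hwc.inv₀ hw0).pow (k + 1)).aestronglyMeasurable (Filter.Eventually.of_forall fun t => ?_)
    rw [norm_pow, norm_inv, hwn]
  have hsum : ∀ t, HasSum (fun k => f k t) (G t / (w t - 1)) := by
    intro t
    have := (hasSum_geometric_of_norm_lt_one (ξ := (w t)⁻¹)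
      (by rw [norm_inv, hwn]; exact inv_lt_one_of_one_lt₀ hs2)).mul_left ((w t)⁻¹ * G t)
    have e1 : (fun k => f k t) = fun k => (w t)⁻¹ * G t * (w t)⁻¹ ^ k := by
      ext k; simp only [f]; ring
    have e2 : G t / (w t - 1) = (w t)⁻¹ * G t * (1 - (w t)⁻¹)⁻¹ := by
      have h0 := hw0 t
      have h1 := hw1 t
      rw [show (1 : ℂ) - (w t)⁻¹ = (w t - 1) * (w t)⁻¹ by field_simp, mul_inv, inv_inv]
      field_simp
    rw [e1, e2]
    exact this
  have hfn : Summable fun k => ∫ t, ‖f k t‖ := by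
    have : (fun k => ∫ t, ‖f k t‖) = fun k : ℕ => (√2)⁻¹ ^ k * ((√2)⁻¹ * ∫ t, ‖G t‖) := by
      ext k
      rw [← mul_assoc, ← pow_succ, ← integral_const_mul]
      congr 1; ext t
      simp only [f]
      rw [norm_mul, norm_pow, norm_inv, hwn]
    rw [this]
    exact (summable_geometric_of_lt_one (by positivity) (inv_lt_one_of_one_lt₀ hs2)).mul_right _
  have hmain := hasSum_integral_of_summable_integral_norm hfi hfn
  have hval : ∀ k, ∫ t, f k t = 2 * Real.pi *
      (((1 / (2 : ℝ) ^ ((k + 1) * m)) * Real.exp (-x / 2 ^ (k + 1)) : ℝ) : ℂ) := by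
    intro k
    have hy : 0 < x / 2 ^ (k + 1) := by positivity
    have h := inv_exp σ hσ _ hy
    have hpt : ∀ t : ℝ, f k t = (1 / (2 : ℂ) ^ ((k + 1) * m)) *
        (((x / 2 ^ (k + 1) : ℝ) : ℂ) ^ (-((σ : ℂ) + t * I)) * Complex.Gamma ((σ : ℂ) + t * I)) := by
      intro t
      simp only [f, hG, hw]
      set s : ℂ := (σ : ℂ) + t * I with hs
      have e1 : ((x / 2 ^ (k + 1) : ℝ) : ℂ) ^ (-s) = (x : ℂ) ^ (-s) * ((2 : ℂ) ^ s) ^ (k + 1) := by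
        have hx0 : (x : ℂ) ≠ 0 := by exact_mod_cast hx.ne'
        have hy0 : ((x / 2 ^ (k + 1) : ℝ) : ℂ) ≠ 0 := by exact_mod_cast hy.ne'
        have hl : Complex.log 2 = ((Real.log 2 : ℝ) : ℂ) := by
          rw [Complex.ofReal_log (by norm_num)]; simp
        rw [Complex.cpow_def_of_ne_zero hx0, Complex.cpow_def_of_ne_zero hy0,
          Complex.cpow_def_of_ne_zero two_ne_zero, ← Complex.ofReal_log hx.le,
          ← Complex.ofReal_log hy.le, hl, ← Complex.exp_nat_mul, ← Complex.exp_add,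
          Real.log_div hx.ne' (by positivity), Real.log_pow]
        congr 1
        push_cast
        ring
      rw [e1, show (m : ℂ) - (σ : ℂ) - t * I = m - s by rw [hs]; ring,
        Complex.cpow_sub _ _ two_ne_zero, Complex.cpow_natCast, inv_div, div_pow, ← pow_mul,
        mul_comm (k + 1) m]
      ring
    simp_rw [hpt]
    rw [integral_const_mul, h]
    push_cast
    rw [neg_div]
    ring
  have hint : ∫ t, (G t / (w t - 1)) = ∫ t, ∑' k, f k t := by
    congr 1; ext t; exact (hsum t).tsum_eq.symm
  refine ⟨?_, ?_⟩
  · have : (fun t => G t / (w t - 1)) = fun t => (w t - 1)⁻¹ * G t := by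
      ext t; rw [div_eq_inv_mul]
    show Integrable (fun t => G t / (w t - 1))
    rw [this]
    refine Integrable.bdd_mul (c := (√2 - 1)⁻¹) hGi
      ((hwc.sub continuous_const).inv₀ hw1).aestronglyMeasurable
      (Filter.Eventually.of_forall fun t => ?_)
    rw [norm_inv]
    refine inv_anti₀ (by linarith) ?_
    have := norm_sub_norm_le (w t) 1
    rwa [hwn, norm_one] at this
  · show _ = _ * ∫ t, (G t / (w t - 1))
    rw [hint, ← hmain.tsum_eq]
    simp_rw [hval]
    rw [tsum_mul_left, ← Complex.ofReal_tsum,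
      tsum_pnat_eq_tsum_succ (f := fun k : ℕ => (1 / (2 : ℝ) ^ (k * m)) * Real.exp (-x / 2 ^ k))]
    have : (Real.pi : ℂ) ≠ 0 := by exact_mod_cast Real.pi_ne_zero
    field_simp

theorem mellin_representation_sum (m : ℕ) (hm : 1 ≤ m) (x : ℝ) (hx : 0 < x) :
    Integrable (fun t : ℝ =>
      (x : ℂ) ^ (-(((m : ℂ) - 1 / 2) + t * I)) * Complex.Gamma (((m : ℂ) - 1 / 2) + t * I) /
        ((2 : ℂ) ^ ((m : ℂ) - ((m : ℂ) - 1 / 2) - t * I) - 1)) ∧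
    ((∑' k : ℕ+, (1 / (2 : ℝ) ^ ((k : ℕ) * m)) * Real.exp (-x / 2 ^ (k : ℕ)) : ℝ) : ℂ) =
      (1 / (2 * Real.pi)) *
        ∫ t : ℝ,
          (x : ℂ) ^ (-(((m : ℂ) - 1 / 2) + t * I)) * Complex.Gamma (((m : ℂ) - 1 / 2) + t * I) /
            ((2 : ℂ) ^ ((m : ℂ) - ((m : ℂ) - 1 / 2) - t * I) - 1) := by
  have h1 : (1 : ℝ) ≤ m := by exact_mod_cast hm
  have h := aux m ((m : ℝ) - 1 / 2) (by linarith) (by ring) x hx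
  have e : (((m : ℝ) - 1 / 2 : ℝ) : ℂ) = (m : ℂ) - 1 / 2 := by push_cast; rfl
  rw [e] at h
  exact h
end
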